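/- arXiv:2201.01031 — 5 statements merged into one kernel-verified Lean document; each statement's English description precedes it below -/
import Mathlib

section
/- Let F be a field of characteristic different from 2, let k ≥ 1, and let ω ∈ F be an element of multiplicative order 2k satisfying ω^k = −1. For 0 ≤ t ≤ k−1 let ζ_t(z) := ∏_{0≤t'≤k−1, t'≠t} (z − ω^{1+2t'})/(ω^{1+2t} − ω^{1+2t'}) ∈ F[z]. Then for each t with 0 ≤ t ≤ k−1 there exists a nonzero constant b_t ∈ F such that the reciprocal polynomial of ζ_t equals b_t·ζ_{k−1−t}. (This is the case γ = −1, r = 2.) -/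
/-!
Up to a nonzero scalar, `ζ_t` is the product of the linear factors `X - a_{t'}` over `t' ≠ t`,
where `a_{t'} = ω ^ (1 + 2t')`. Reversal is multiplicative over a field and sends `X - a` to a
nonzero multiple of `X - a⁻¹` (`reverse_C_mul_X_sub_C`). Since `ω ^ (2k) = 1`, the inverse of
`a_{t'}` is `a_{k-1-t'}` (`node_mul_node_reflect`), so reversal permutes the nodes by the
reflection `t' ↦ k - 1 - t'`, which moves the omitted node from `t` to `k - 1 - t`. The
normalizing scalars are nonzero because the nodes are distinct (`node_sub_node_ne_zero`).
-/

open Polynomial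

/-- The Lagrange interpolation polynomial `ζ_t` at the `k` points `ω^{1+t'r}`,
`0 ≤ t' ≤ k−1`. -/
noncomputable def zetaPoly {F : Type*} [Field F] (ω : F) (r k t : ℕ) : Polynomial F :=
  ∏ t' ∈ (Finset.range k).erase t,
    (C ((ω ^ (1 + t * r) - ω ^ (1 + t' * r))⁻¹) * (X - C (ω ^ (1 + t' * r))))

theorem reverse_finset_prod {F ι : Type*} [Field F] (s : Finset ι) (f : ι → F[X]) :
    (∏ i ∈ s, f i).reverse = ∏ i ∈ s, (f i).reverse := by
  classical
  induction s using Finset.induction_on with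
  | empty => simpa using reverse_C (1 : F)
  | insert a s ha ih =>
    rw [Finset.prod_insert ha, Finset.prod_insert ha, reverse_mul_of_domain, ih]

theorem reverse_C_mul_X_sub_C {F : Type*} [Field F] {a a' : F} (c : F) (h : a * a' = 1) :
    (C c * (X - C a)).reverse = C (-(c * a)) * (X - C a') := by
  have h1 : (X - C a : F[X]).reverse = 1 - C a * X := by
    have hX : (X : F[X]).reverse = 1 := by
      rw [← one_mul X, reverse_mul_X, ← C_1, reverse_C]
    rw [sub_eq_add_neg, ← C_neg, reverse_add_C, hX, natDegree_X, C_neg]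
    ring
  rw [reverse_mul_of_domain, reverse_C, h1]
  have h2 : (C a * C a' : F[X]) = 1 := by rw [← C_mul, h, C_1]
  simp only [C_neg, C_mul]
  linear_combination (-C c) * h2

theorem node_mul_node_reflect {F : Type*} [Field F] {ω : F} {k i : ℕ}
    (hω : orderOf ω = 2 * k) (hi : i < k) :
    ω ^ (1 + i * 2) * ω ^ (1 + (k - 1 - i) * 2) = 1 := by
  rw [← pow_add, show 1 + i * 2 + (1 + (k - 1 - i) * 2) = 2 * k by omega, ← hω,
    pow_orderOf_eq_one]

theorem node_sub_node_ne_zero {F : Type*} [Field F] {ω : F} {k i j : ℕ}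
    (hω : orderOf ω = 2 * k) (hi : i < k) (hj : j < k) (hij : j ≠ i) :
    ω ^ (1 + i * 2) - ω ^ (1 + j * 2) ≠ 0 := by
  intro h
  have := pow_injOn_Iio_orderOf (x := ω) (by simp [hω]; omega) (by simp [hω]; omega)
    (sub_eq_zero.mp h)
  omega

/-- **Lemma 5, case γ = −1, r = 2**: over a field of characteristic ≠ 2, with `ω` of
multiplicative order `2k` and `ω^k = −1`, the reciprocal polynomial of `ζ_t` is a
nonzero scalar multiple of `ζ_{k−1−t}`. -/
theorem stmt6 {F : Type*} [Field F] (h2 : (2 : F) ≠ 0) (k : ℕ) (hk : 1 ≤ k)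
    (ω : F) (hω : orderOf ω = 2 * k) (hωk : ω ^ k = (-1 : F))
    (t : ℕ) (ht : t < k) :
    ∃ b : F, b ≠ 0 ∧
      (zetaPoly ω 2 k t).reverse = C b * zetaPoly ω 2 k (k - 1 - t) := by
  have hsub : ∀ i ∈ (Finset.range k).erase t,
      ω ^ (1 + t * 2) - ω ^ (1 + i * 2) ≠ 0 ∧
      ω ^ (1 + (k - 1 - t) * 2) - ω ^ (1 + (k - 1 - i) * 2) ≠ 0 := by
    intro i hi
    simp only [Finset.mem_erase, Finset.mem_range] at hi
    exact ⟨node_sub_node_ne_zero hω ht hi.2 hi.1,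
      node_sub_node_ne_zero hω (by omega) (by omega) (by omega)⟩
  have hω0 : ω ≠ 0 := by
    rintro rfl
    rw [zero_pow (by omega)] at hωk
    exact one_ne_zero (neg_eq_zero.mp hωk.symm)
  have hreindex : zetaPoly ω 2 k (k - 1 - t) = ∏ i ∈ (Finset.range k).erase t,
      (C ((ω ^ (1 + (k - 1 - t) * 2) - ω ^ (1 + (k - 1 - i) * 2))⁻¹) *
        (X - C (ω ^ (1 + (k - 1 - i) * 2)))) := by
    refine (Finset.prod_bij (fun i _ => k - 1 - i) ?_ ?_ ?_ ?_).symm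
    · intro i hi
      simp only [Finset.mem_erase, Finset.mem_range] at hi ⊢
      omega
    · intro i hi j hj hij
      simp only [Finset.mem_erase, Finset.mem_range] at hi hj
      omega
    · intro j hj
      simp only [Finset.mem_erase, Finset.mem_range] at hj
      refine ⟨k - 1 - j, ?_, by omega⟩
      simp only [Finset.mem_erase, Finset.mem_range]
      omega
    · intro i hi
      rfl
  -- Each factor contributes `-a_i` times the ratio of the two normalizing scalars.
  refine ⟨∏ i ∈ (Finset.range k).erase t,
    (-((ω ^ (1 + t * 2) - ω ^ (1 + i * 2))⁻¹ * ω ^ (1 + i * 2)) *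
      (ω ^ (1 + (k - 1 - t) * 2) - ω ^ (1 + (k - 1 - i) * 2))), ?_, ?_⟩
  · refine Finset.prod_ne_zero_iff.mpr fun i hi => ?_
    obtain ⟨h₁, h₂⟩ := hsub i hi
    exact mul_ne_zero (neg_ne_zero.mpr (mul_ne_zero (inv_ne_zero h₁) (pow_ne_zero _ hω0))) h₂
  · rw [hreindex, zetaPoly, reverse_finset_prod, map_prod, ← Finset.prod_mul_distrib]
    refine Finset.prod_congr rfl fun i hi => ?_
    have hik : i < k := Finset.mem_range.mp (Finset.mem_of_mem_erase hi)
    rw [reverse_C_mul_X_sub_C _ (node_mul_node_reflect hω hik), ← mul_assoc, ← C_mul,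
      mul_assoc, mul_inv_cancel₀ (hsub i hi).2, mul_one]
end

section
/- Let F be a field, let γ be a nonzero element of F of multiplicative order r, let k ≥ 1, and let ω ∈ F be an element of multiplicative order rk satisfying ω^k = γ. For 0 ≤ t ≤ k−1 let ζ_t(z) := ∏_{0≤t'≤k−1, t'≠t} (z − ω^{1+t'r})/(ω^{1+tr} − ω^{1+t'r}). Then for every polynomial g ∈ F[x,y,z] and every t with 0 ≤ t ≤ k−1, one has ζ_t(z)·g(x,y,z) ≡ ζ_t(z)·g(x,y,ω^{1+tr}) modulo the ideal of F[x,y,z] generated by z^k − γ, where g(x,y,ω^{1+tr}) ∈ F[x,y] denotes the evaluation of g at z = ω^{1+tr}. -/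
/-!
The evaluation points `ω^{1+t'r} = (ω^r)^{t'} ω` are the `k` roots of `z^k - γ`, because `ω^r` is a
primitive `k`-th root of unity and `ω^k = γ`. Hence `(z - ω^{1+tr}) ζ_t(z)` is a scalar multiple of
`z^k - γ` (`dvd_sub_mul_zetaPoly`). On the other hand `z - ω^{1+tr}` divides
`g(x,y,z) - g(x,y,ω^{1+tr})` (`X_sub_C_dvd_sub_aeval`). Multiplying the latter by `ζ_t(z)` gives the
congruence.

If `γ` has infinite order then `r = 0` and all the points coincide: for `k = 1` the argument above
still applies, and for `k ≥ 2` the factors `0⁻¹ = 0` make `ζ_t` vanish.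
-/

open Polynomial

/-- Factor theorem in the last variable. -/
lemma X_sub_C_dvd_sub_aeval {F : Type*} [Field F] (a : F) (g : MvPolynomial (Fin 3) F) :
    (MvPolynomial.X 2 - MvPolynomial.C a : MvPolynomial (Fin 3) F) ∣
      g - MvPolynomial.aeval ![MvPolynomial.X 0, MvPolynomial.X 1, MvPolynomial.C a] g := by
  rw [← Ideal.mem_span_singleton, ← Ideal.Quotient.eq]
  set I : Ideal (MvPolynomial (Fin 3) F) :=
    Ideal.span {MvPolynomial.X 2 - MvPolynomial.C a} with hI
  -- The two sides are algebra homomorphisms in `g`, so it suffices to compare them on variables.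
  have h : Ideal.Quotient.mkₐ F I = (Ideal.Quotient.mkₐ F I).comp
      (MvPolynomial.aeval ![MvPolynomial.X 0, MvPolynomial.X 1, MvPolynomial.C a]) := by
    apply MvPolynomial.algHom_ext
    intro i
    fin_cases i
    · simp
    · simp
    · simpa using Ideal.Quotient.eq.2 (Ideal.mem_span_singleton_self _)
  exact DFunLike.congr_fun h g

lemma dvd_sub_mul_zetaPoly {F : Type*} [Field F] {γ ω : F} {r k t : ℕ}
    (hω : orderOf ω = r * k) (hωk : ω ^ k = γ) (ht : t < k) :
    (X ^ k - C γ : F[X]) ∣ (X - C (ω ^ (1 + t * r))) * zetaPoly ω r k t := by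
  have hk : 0 < k := by lia
  by_cases hrk : r = 0 ∧ k ≠ 1
  · obtain ⟨rfl, hk1⟩ := hrk
    -- All points equal `ω`, so any index other than `t` contributes the factor `0⁻¹ = 0`.
    obtain ⟨s, hs, hst⟩ : ∃ s < k, s ≠ t := by
      rcases Nat.eq_zero_or_pos t with h | h
      · exact ⟨1, by lia, by lia⟩
      · exact ⟨0, hk, by lia⟩
    have hz : zetaPoly ω 0 k t = 0 :=
      Finset.prod_eq_zero (i := s) (by simp [hs, hst]) (by simp)
    simp [hz]
  · have hprim : IsPrimitiveRoot (ω ^ r) k := by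
      rcases Nat.eq_zero_or_pos r with h | h
      · obtain rfl : k = 1 := by tauto
        simp [h]
      · exact (IsPrimitiveRoot.orderOf ω).pow (by rw [hω]; positivity) hω
    have hpt : ∀ i, (ω ^ r) ^ i * ω = ω ^ (1 + i * r) := fun i => by ring
    rw [X_pow_sub_C_eq_prod hprim hk hωk, zetaPoly, Finset.prod_mul_distrib,
      ← Finset.mul_prod_erase _ _ (Finset.mem_range.2 ht)]
    simp only [hpt]
    exact mul_dvd_mul_left _ (Dvd.intro_left _ rfl)

/-- For every `g ∈ F[x,y,z]` and `0 ≤ t ≤ k−1`,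
`ζ_t(z)·g(x,y,z) ≡ ζ_t(z)·g(x,y,ω^{1+tr})` modulo `z^k − γ`. -/
theorem stmt7 {F : Type*} [Field F] (γ : F) (hγ : γ ≠ 0) (r k : ℕ)
    (hr : orderOf γ = r) (hk : 1 ≤ k)
    (ω : F) (hω : orderOf ω = r * k) (hωk : ω ^ k = γ)
    (g : MvPolynomial (Fin 3) F) (t : ℕ) (ht : t < k) :
    Polynomial.aeval (MvPolynomial.X 2 : MvPolynomial (Fin 3) F) (zetaPoly ω r k t) * g
        - Polynomial.aeval (MvPolynomial.X 2 : MvPolynomial (Fin 3) F) (zetaPoly ω r k t) *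
            MvPolynomial.aeval
              ![MvPolynomial.X 0, MvPolynomial.X 1, MvPolynomial.C (ω ^ (1 + t * r))] g
      ∈ Ideal.span {(MvPolynomial.X 2 : MvPolynomial (Fin 3) F) ^ k - MvPolynomial.C γ} := by
  have h₁ := map_dvd (Polynomial.aeval (MvPolynomial.X 2 : MvPolynomial (Fin 3) F))
    (dvd_sub_mul_zetaPoly hω hωk ht)
  simp only [map_sub, map_mul, map_pow, aeval_X, aeval_C, MvPolynomial.algebraMap_eq] at h₁
  rw [Ideal.mem_span_singleton, ← mul_sub, mul_comm]
  simp only [map_pow] at h₁ ⊢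
  refine h₁.trans (mul_dvd_mul_right ?_ _)
  simpa only [map_pow] using X_sub_C_dvd_sub_aeval (ω ^ (1 + t * r)) g
end

section
/- Let F be a finite field, let s,ℓ,k ≥ 1, and let α,β,γ be nonzero elements of F; let r and r' be the multiplicative orders of γ and β. Assume ω ∈ F has multiplicative order rk with ω^k = γ, and θ ∈ F has multiplicative order r'ℓ with θ^ℓ = β. Let R := F[x,y,z]/⟨x^s−α, y^ℓ−β, z^k−γ⟩ with quotient map π, and let ζ_t(z) := ∏_{t'≠t}(z − ω^{1+t'r})/(ω^{1+tr} − ω^{1+t'r}) for 0 ≤ t ≤ k−1 and η_j(y) := ∏_{j'≠j}(y − θ^{1+j'r'})/(θ^{1+jr'} − θ^{1+j'r'}) for 0 ≤ j ≤ ℓ−1. Let C be an ideal of R. Suppose that for each t with 0 ≤ t ≤ k−1 there exist polynomials p_0^{(t)}, …, p_{ℓ−1}^{(t)} ∈ F[x], each dividing x^s − α, such that for every polynomial f ∈ F[x,y] (regarded in F[x,y,z]): π(ζ_t(z)·f) ∈ C if and only if f lies in the ideal of F[x,y] generated by {η_j(y)·p_j^{(t)}(x) : 0 ≤ j ≤ ℓ−1}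 ∪ {x^s − α, y^ℓ − β}. Then C equals the ideal of R generated by the sℓ·k elements π(ζ_t(z)·η_j(y)·p_j^{(t)}(x)), 0 ≤ t ≤ k−1, 0 ≤ j ≤ ℓ−1. -/
/-!
The nodes `ω_t = ω^{1+tr}`, `0 ≤ t < k`, are `k` distinct roots of `z^k − γ`, so the `ζ_t` are the
Lagrange basis polynomials at all the roots of `z^k − γ`. Hence they sum to `1`
(`sum_zetaPoly`), and `(z − ω_t) ζ_t(z)` vanishes modulo `z^k − γ` (`dvd_mul_zetaPoly`). The second
fact gives `π(ζ_t · g) = π(ζ_t · g(x, y, ω_t))` for every `g ∈ F[x,y,z]` (`mk_zeta_mul`).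

If `π(g) ∈ C`, then `π(ζ_t · g(x, y, ω_t)) ∈ C`, so the hypothesis on the `t`-th layer puts
`g(x, y, ω_t)` in the two-dimensional ideal; multiplying by `ζ_t` and applying `π`, which kills
`x^s − α` and `y^ℓ − β`, lands in the ideal of the claimed generators. Summing over `t` recovers
`π(g)`. The other inclusion is the layer hypothesis applied to the generators `η_j p_j^{(t)}`.
-/

open Polynomial

/-- The ideal `⟨x^s − α, y^ℓ − β, z^k − γ⟩` of `F[x,y,z]`. -/
noncomputable def ccIdeal (F : Type*) [Field F] (s l k : ℕ) (α β γ : F) :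
    Ideal (MvPolynomial (Fin 3) F) :=
  Ideal.span { MvPolynomial.X 0 ^ s - MvPolynomial.C α,
               MvPolynomial.X 1 ^ l - MvPolynomial.C β,
               MvPolynomial.X 2 ^ k - MvPolynomial.C γ }

/-- A univariate polynomial viewed in `F[x,y,z]` as a polynomial in `x`. -/
noncomputable def inX {F : Type*} [Field F] (p : Polynomial F) : MvPolynomial (Fin 3) F :=
  Polynomial.aeval (MvPolynomial.X 0) p

/-- A univariate polynomial viewed in `F[x,y,z]` as a polynomial in `y`. -/
noncomputable def inY {F : Type*} [Field F] (p : Polynomial F) : MvPolynomial (Fin 3) F :=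
  Polynomial.aeval (MvPolynomial.X 1) p

/-- A univariate polynomial viewed in `F[x,y,z]` as a polynomial in `z`. -/
noncomputable def inZ {F : Type*} [Field F] (p : Polynomial F) : MvPolynomial (Fin 3) F :=
  Polynomial.aeval (MvPolynomial.X 2) p

section Nodes

variable {F : Type*} [Field F]

theorem zetaPoly_eq_basis (ω : F) (r k t : ℕ) :
    zetaPoly ω r k t = Lagrange.basis (Finset.range k) (fun i => ω ^ (1 + i * r)) t := rfl

/-- The exponents `1 + tr`, `t < k`, are distinct modulo the order `rk` of `ω`. -/
theorem nodes_injOn {ω : F} {r k : ℕ} (hr : 0 < r) (hω : orderOf ω = r * k) :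
    Set.InjOn (fun i : ℕ => ω ^ (1 + i * r)) (Finset.range k : Set ℕ) := by
  intro a ha b hb hab
  have ha : a < k := by simpa using ha
  have hb : b < k := by simpa using hb
  have hω0 : ω ≠ 0 := by
    rintro rfl
    rw [orderOf_zero] at hω
    have := Nat.mul_pos hr (by omega : 0 < k)
    omega
  -- Cancelling one factor `ω` leaves exponents below the order.
  have h : ω ^ (a * r) = ω ^ (b * r) := by
    simpa [pow_add, hω0] using hab
  have hlt : ∀ c < k, c * r ∈ Set.Iio (orderOf ω) := fun c hc => by
    rw [hω, mul_comm r k]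
    exact Nat.mul_lt_mul_of_pos_right hc hr
  exact Nat.eq_of_mul_eq_mul_right hr (pow_injOn_Iio_orderOf (hlt a ha) (hlt b hb) h)

theorem sum_zetaPoly {ω : F} {r k : ℕ} (hr : 0 < r) (hk : 1 ≤ k) (hω : orderOf ω = r * k) :
    ∑ t : Fin k, zetaPoly ω r k t = 1 := by
  rw [Fin.sum_univ_eq_sum_range (fun t => zetaPoly ω r k t) k]
  exact Lagrange.sum_basis (nodes_injOn hr hω) ⟨0, Finset.mem_range.2 hk⟩

/-- `z^k − γ` and the product of all `z − ω_t` are monic of degree `k` with the same roots, so they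
agree, and `(z − ω_t) ζ_t` is a scalar multiple of that product. -/
theorem dvd_mul_zetaPoly {ω γ : F} {r k : ℕ} (hr : 0 < r) (hω : orderOf ω = r * k)
    (hγ : orderOf γ = r) (hωk : ω ^ k = γ) {t : ℕ} (ht : t < k) :
    X ^ k - C γ ∣ (X - C (ω ^ (1 + t * r))) * zetaPoly ω r k t := by
  have hnodal : X ^ k - C γ = ∏ i ∈ Finset.range k, (X - C (ω ^ (1 + i * r))) := by
    have hk : k ≠ 0 := by omega
    refine Polynomial.eq_of_degree_sub_lt_of_eval_index_eq (Finset.range k)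
      (nodes_injOn hr hω) ?_ ?_
    · have h1 := Polynomial.monic_X_pow_sub_C γ hk
      have h2 : (∏ i ∈ Finset.range k, (X - C (ω ^ (1 + i * r)))).Monic :=
        Polynomial.monic_prod_of_monic _ _ fun i _ => Polynomial.monic_X_sub_C _
      have hd1 : (X ^ k - C γ).degree = (k : WithBot ℕ) :=
        Polynomial.degree_X_pow_sub_C (by omega) γ
      have hd2 : (∏ i ∈ Finset.range k, (X - C (ω ^ (1 + i * r)))).degree = (k : WithBot ℕ) := by
        simp [Polynomial.degree_prod, -map_pow]
      have := Polynomial.degree_sub_lt_left (hd1.trans hd2.symm) h1.ne_zero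
        (h1.leadingCoeff.trans h2.leadingCoeff.symm)
      simpa [hd1] using this
    · intro i hi
      have h1 : (ω ^ (1 + i * r)) ^ k = γ := by
        rw [← pow_mul, mul_comm, pow_mul, hωk, pow_add, pow_one, mul_comm i r, pow_mul, ← hγ,
          pow_orderOf_eq_one, one_pow, mul_one]
      rw [Polynomial.eval_prod, Finset.prod_eq_zero hi (by simp)]
      simp [h1]
  rw [hnodal, ← Finset.mul_prod_erase _ _ (Finset.mem_range.2 ht), zetaPoly,
    Finset.prod_mul_distrib]
  exact mul_dvd_mul_left _ (Dvd.intro_left _ rfl)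

end Nodes

section Layers

variable {F : Type*} [Field F]

/-- The substitution `g ↦ g(x, y, c)` from `F[x,y,z]` to `F[x,y]`. -/
noncomputable def substZ (c : F) : MvPolynomial (Fin 3) F →ₐ[F] MvPolynomial (Fin 2) F :=
  MvPolynomial.aeval ![MvPolynomial.X 0, MvPolynomial.X 1, MvPolynomial.C c]

theorem dvd_sub_substZ (c : F) (g : MvPolynomial (Fin 3) F) :
    MvPolynomial.X 2 - MvPolynomial.C c ∣
      g - MvPolynomial.rename Fin.castSucc (substZ c g) := by
  -- The two algebra maps agree on the variables modulo `z − c`.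
  have h : Ideal.Quotient.mkₐ F
        (Ideal.span {(MvPolynomial.X 2 - MvPolynomial.C c : MvPolynomial (Fin 3) F)}) =
      (Ideal.Quotient.mkₐ F _).comp
        ((MvPolynomial.rename Fin.castSucc).comp (substZ c)) := by
    apply MvPolynomial.algHom_ext
    intro i
    fin_cases i
    · simp [substZ]
    · simp [substZ]
    · simp [substZ, Ideal.Quotient.mk_eq_mk_iff_sub_mem]
  have := DFunLike.congr_fun h g
  simpa [Ideal.Quotient.mk_eq_mk_iff_sub_mem, Ideal.mem_span_singleton] using this

/-- Modulo `z^k − γ`, multiplication by `ζ_t` replaces `z` by the node `ω_t`. -/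
theorem mk_zeta_mul {s l k : ℕ} {α β γ ω : F} {r : ℕ} (hr : 0 < r) (hω : orderOf ω = r * k)
    (hγ : orderOf γ = r) (hωk : ω ^ k = γ) {t : ℕ} (ht : t < k) (g : MvPolynomial (Fin 3) F) :
    Ideal.Quotient.mk (ccIdeal F s l k α β γ) (inZ (zetaPoly ω r k t) * g) =
      Ideal.Quotient.mk (ccIdeal F s l k α β γ) (inZ (zetaPoly ω r k t) *
        MvPolynomial.rename Fin.castSucc (substZ (ω ^ (1 + t * r)) g)) := by
  rw [Ideal.Quotient.mk_eq_mk_iff_sub_mem, ← mul_sub]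
  obtain ⟨q, hq⟩ := dvd_sub_substZ (ω ^ (1 + t * r)) g
  have hd : MvPolynomial.X 2 ^ k - MvPolynomial.C γ ∣
      (MvPolynomial.X 2 - MvPolynomial.C (ω ^ (1 + t * r))) * inZ (zetaPoly ω r k t) := by
    have := map_dvd (Polynomial.aeval (MvPolynomial.X 2 : MvPolynomial (Fin 3) F))
      (dvd_mul_zetaPoly hr hω hγ hωk ht)
    rwa [map_mul, map_sub, map_sub, map_pow, Polynomial.aeval_X, Polynomial.aeval_C,
      Polynomial.aeval_C, MvPolynomial.algebraMap_eq] at this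
  rw [hq, ← mul_assoc, mul_comm (inZ _)]
  exact Ideal.mem_of_dvd _ (hd.mul_right q) (Ideal.subset_span (by simp))

theorem rename_aeval (i : Fin 2) (q : Polynomial F) :
    MvPolynomial.rename Fin.castSucc
        (Polynomial.aeval (MvPolynomial.X i : MvPolynomial (Fin 2) F) q) =
      Polynomial.aeval (MvPolynomial.X i.castSucc : MvPolynomial (Fin 3) F) q := by
  rw [← Polynomial.aeval_algHom_apply, MvPolynomial.rename_X]

end Layers

/-- **Theorem 1**: if for each `t` the "`t`-th layer" of the ideal `C` of
`R = F[x,y,z]/⟨x^s−α, y^ℓ−β, z^k−γ⟩` is the two-dimensional constacyclic code generated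
by the `η_j(y)·p_j^{(t)}(x)`, then `C` is generated by the `ζ_t(z)·η_j(y)·p_j^{(t)}(x)`. -/
theorem stmt8 {F : Type*} [Field F] [Fintype F] (s l k : ℕ)
    (hs : 1 ≤ s) (hl : 1 ≤ l) (hk : 1 ≤ k)
    (α β γ : F) (hα : α ≠ 0) (hβ : β ≠ 0) (hγ : γ ≠ 0)
    (r r' : ℕ) (hr : orderOf γ = r) (hr' : orderOf β = r')
    (ω : F) (hω : orderOf ω = r * k) (hωk : ω ^ k = γ)
    (θ : F) (hθ : orderOf θ = r' * l) (hθl : θ ^ l = β)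
    (C : Ideal (MvPolynomial (Fin 3) F ⧸ ccIdeal F s l k α β γ))
    (p : Fin k → Fin l → Polynomial F)
    (hdvd : ∀ t j, p t j ∣ Polynomial.X ^ s - Polynomial.C α)
    (hchar : ∀ t : Fin k, ∀ f : MvPolynomial (Fin 2) F,
      Ideal.Quotient.mk (ccIdeal F s l k α β γ)
          (inZ (zetaPoly ω r k t) * MvPolynomial.rename Fin.castSucc f) ∈ C ↔
        f ∈ Ideal.span
          ((Set.range fun j : Fin l =>
              Polynomial.aeval (MvPolynomial.X 1 : MvPolynomial (Fin 2) F)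
                  (zetaPoly θ r' l j) *
                Polynomial.aeval (MvPolynomial.X 0 : MvPolynomial (Fin 2) F) (p t j)) ∪
            {MvPolynomial.X 0 ^ s - MvPolynomial.C α,
             MvPolynomial.X 1 ^ l - MvPolynomial.C β})) :
    C = Ideal.span (Set.range fun tj : Fin k × Fin l =>
      Ideal.Quotient.mk (ccIdeal F s l k α β γ)
        (inZ (zetaPoly ω r k tj.1) * inY (zetaPoly θ r' l tj.2) * inX (p tj.1 tj.2))) := by
  have hr0 : 0 < r := hr ▸ (isOfFinOrder_iff_pow_eq_one.2
    ⟨Fintype.card F - 1, by have := Fintype.one_lt_card (α := F); omega,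
      FiniteField.pow_card_sub_one_eq_one γ hγ⟩).orderOf_pos
  have hgen : ∀ (t : Fin k) (j : Fin l),
      inZ (zetaPoly ω r k t) * MvPolynomial.rename Fin.castSucc
          (Polynomial.aeval (MvPolynomial.X 1 : MvPolynomial (Fin 2) F) (zetaPoly θ r' l j) *
            Polynomial.aeval (MvPolynomial.X 0 : MvPolynomial (Fin 2) F) (p t j)) =
        inZ (zetaPoly ω r k t) * inY (zetaPoly θ r' l j) * inX (p t j) := by
    intro t j
    rw [map_mul, rename_aeval, rename_aeval, ← mul_assoc]
    rfl
  apply le_antisymm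
  · intro c hc
    obtain ⟨g, rfl⟩ := Ideal.Quotient.mk_surjective c
    have hsum : g = ∑ t : Fin k, inZ (zetaPoly ω r k t) * g := by
      rw [← Finset.sum_mul]
      simp only [inZ]
      rw [← map_sum, sum_zetaPoly hr0 hk hω, map_one, one_mul]
    rw [hsum, map_sum]
    refine Ideal.sum_mem _ fun t _ => ?_
    have hmem := C.mul_mem_left
      (Ideal.Quotient.mk (ccIdeal F s l k α β γ) (inZ (zetaPoly ω r k t))) hc
    rw [← map_mul, mk_zeta_mul hr0 hω hr hωk t.2 g, hchar] at hmem
    rw [mk_zeta_mul hr0 hω hr hωk t.2 g]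
    generalize substZ (ω ^ (1 + (t : ℕ) * r)) g = f at hmem ⊢
    induction hmem using Submodule.span_induction with
    | mem f hf =>
      rcases hf with ⟨j, rfl⟩ | rfl | rfl
      · exact Ideal.subset_span ⟨(t, j), by rw [hgen]⟩
      -- The images of `x^s − α` and `y^ℓ − β` vanish in the quotient.
      · rw [(Ideal.Quotient.eq_zero_iff_mem (I := ccIdeal F s l k α β γ)).2]
        · exact Ideal.zero_mem _
        · exact Ideal.mul_mem_left _ _ (Ideal.subset_span (by simp))
      · rw [(Ideal.Quotient.eq_zero_iff_mem (I := ccIdeal F s l k α β γ)).2]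
        · exact Ideal.zero_mem _
        · exact Ideal.mul_mem_left _ _ (Ideal.subset_span (by simp))
    | zero => simp
    | add a b _ _ ha hb =>
      rw [map_add, mul_add, map_add]
      exact Ideal.add_mem _ ha hb
    | smul a b _ hb =>
      rw [smul_eq_mul, map_mul (MvPolynomial.rename Fin.castSucc), mul_left_comm, map_mul]
      exact Ideal.mul_mem_left _ _ hb
  · rw [Ideal.span_le]
    rintro _ ⟨⟨t, j⟩, rfl⟩
    have := (hchar t _).2 (Ideal.subset_span (Or.inl ⟨j, rfl⟩))
    rwa [hgen] at this
end

section
/- Let F be a finite field, let s,ℓ,k ≥ 1, and let α,β,γ be nonzero elements of F; let r and r' be the multiplicative orders of γ and β. Assume ω ∈ F has multiplicative order rk with ω^k = γ, and θ ∈ F has multiplicative order r'ℓ with θ^ℓ = β. Let R := F[x,y,z]/⟨x^s−α, y^ℓ−β, z^k−γ⟩ with quotient map π, and let ζ_t(z) := ∏_{t'≠t}(z − ω^{1+t'r})/(ω^{1+tr} − ω^{1+t'r}) for 0 ≤ t ≤ k−1 and η_j(y) := ∏_{j'≠j}(y − θ^{1+j'r'})/(θ^{1+jr'} − θ^{1+j'r'})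 for 0 ≤ j ≤ ℓ−1. For 0 ≤ t ≤ k−1 and 0 ≤ j ≤ ℓ−1 let p_j^{(t)} ∈ F[x] be a monic divisor of x^s − α of degree a_{t,j}. Then the family of elements π(x^i·ζ_t(z)·η_j(y)·p_j^{(t)}(x)) of R, for 0 ≤ t ≤ k−1, 0 ≤ j ≤ ℓ−1, 0 ≤ i ≤ s − a_{t,j} − 1, is linearly independent over F. -/
/-!
For fixed `t`, `j`, substituting `y ↦ θ^{1+jr'}` and `z ↦ ω^{1+tr}` respects the relations
`y^ℓ = β`, `z^k = γ`, hence defines an `F`-algebra map from `R` to `F[x]/⟨x^s − α⟩`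
(`evalYZ`). The order hypotheses make the interpolation nodes distinct (`node_injOn`), so `ζ` and
`η` are the Lagrange basis there (`zetaPoly_eval`), and the map annihilates every member of the
family except those indexed by `(t, j, i)`, which it sends to the class of `x^i · p_j^{(t)}(x)`.
These are polynomials of distinct degrees below `s`, so a vanishing linear combination of them
modulo `x^s − α` is already zero in `F[x]`, and all its coefficients vanish.
-/

open Polynomial

theorem node_pow {F : Type*} [Field F] (ω γ : F) (r k t : ℕ) (hr : orderOf γ = r)
    (hωk : ω ^ k = γ) : (ω ^ (1 + t * r)) ^ k = γ := by
  rw [← pow_mul, mul_comm, pow_mul, hωk, pow_add, mul_comm t, pow_mul, ← hr, pow_orderOf_eq_one]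
  simp

theorem node_injOn {F : Type*} [Field F] [Fintype F] (ω γ : F) (r k : ℕ) (hk : 1 ≤ k)
    (hγ : γ ≠ 0) (hω : orderOf ω = r * k) (hωk : ω ^ k = γ) :
    Set.InjOn (fun t : ℕ => ω ^ (1 + t * r)) (Set.Iio k) := by
  have hω0 : ω ≠ 0 := by
    rintro rfl
    exact hγ (by rw [← hωk, zero_pow (by omega)])
  -- `F` is finite, so the nonzero `ω` has positive order and the step `r` is nonzero.
  have hpos : 0 < orderOf ω := by
    rw [orderOf_pos_iff, isOfFinOrder_iff_pow_eq_one]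
    exact ⟨Fintype.card F - 1, Nat.sub_pos_of_lt Fintype.one_lt_card,
      FiniteField.pow_card_sub_one_eq_one ω hω0⟩
  have hr : 0 < r := Nat.pos_of_mul_pos_right (hω ▸ hpos)
  intro t ht t' ht' h
  simp only [pow_add, pow_one] at h
  have h2 := mul_left_cancel₀ hω0 h
  have hlt : ∀ u ∈ Set.Iio k, u * r < orderOf ω := fun u hu => by
    rw [hω, mul_comm]; exact Nat.mul_lt_mul_of_pos_left hu hr
  exact Nat.eq_of_mul_eq_mul_right hr (pow_injOn_Iio_orderOf (hlt t ht) (hlt t' ht') h2)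

theorem zetaPoly_eval {F : Type*} [Field F] (ω : F) (r k : ℕ)
    (hinj : Set.InjOn (fun t : ℕ => ω ^ (1 + t * r)) (Set.Iio k)) (t u : Fin k) :
    (zetaPoly ω r k t).eval (ω ^ (1 + (u : ℕ) * r)) = if t = u then 1 else 0 := by
  unfold zetaPoly
  rw [eval_prod]
  split_ifs with h
  · subst h
    refine Finset.prod_eq_one fun t' ht' => ?_
    rw [Finset.mem_erase, Finset.mem_range] at ht'
    simp only [eval_mul, eval_C, eval_sub, eval_X]
    refine inv_mul_cancel₀ (sub_ne_zero.2 fun e => ht'.1 ?_)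
    exact (hinj t.2 ht'.2 e).symm
  · refine Finset.prod_eq_zero (i := (u : ℕ)) ?_ (by simp)
    rw [Finset.mem_erase, Finset.mem_range]
    exact ⟨fun e => h (Fin.ext e.symm), u.2⟩

/-- The `F`-algebra map `F[x,y,z]/⟨x^s − α, y^ℓ − β, z^k − γ⟩ → F[x]/⟨x^s − α⟩` substituting
an `ℓ`-th root `b` of `β` for `y` and a `k`-th root `c` of `γ` for `z`. -/
noncomputable def evalYZ {F : Type*} [Field F] (s l k : ℕ) (α β γ b c : F)
    (hb : b ^ l = β) (hc : c ^ k = γ) :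
    (MvPolynomial (Fin 3) F ⧸ ccIdeal F s l k α β γ) →ₐ[F]
      AdjoinRoot (X ^ s - C α : F[X]) :=
  Ideal.Quotient.liftₐ _
    (MvPolynomial.aeval ![AdjoinRoot.root _, algebraMap F _ b, algebraMap F _ c]) (by
      intro q hq
      have hle : ccIdeal F s l k α β γ ≤ RingHom.ker
          (MvPolynomial.aeval ![AdjoinRoot.root (X ^ s - C α : F[X]), algebraMap F _ b,
            algebraMap F _ c] : MvPolynomial (Fin 3) F →ₐ[F] _) := by
        refine Ideal.span_le.2 ?_
        rintro _ (rfl | rfl | rfl)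
        · have h := AdjoinRoot.eval₂_root (X ^ s - C α : F[X])
          simpa [RingHom.mem_ker, AdjoinRoot.algebraMap_eq] using h
        · simp [RingHom.mem_ker, ← hb]
        · simp [RingHom.mem_ker, ← hc]
      exact hle hq)

theorem evalYZ_apply {F : Type*} [Field F] (s l k : ℕ) (α β γ b c : F)
    (hb : b ^ l = β) (hc : c ^ k = γ) (f g h : F[X]) :
    evalYZ s l k α β γ b c hb hc
      (Ideal.Quotient.mk (ccIdeal F s l k α β γ) (inX f * inY g * inZ h)) =
    AdjoinRoot.mk _ (f * C (g.eval b) * C (h.eval c)) := by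
  change MvPolynomial.aeval _ (inX f * inY g * inZ h) = _
  simp only [inX, inY, inZ, map_mul, ← Polynomial.aeval_algHom_apply, MvPolynomial.aeval_X,
    Matrix.cons_val, Polynomial.aeval_algebraMap_apply_eq_algebraMap_eval, AdjoinRoot.aeval_eq,
    AdjoinRoot.mk_C]
  simp only [AdjoinRoot.algebraMap_eq]

/-- **Theorem 2**: the family `π(x^i · ζ_t(z) · η_j(y) · p_j^{(t)}(x))`, for
`0 ≤ t ≤ k−1`, `0 ≤ j ≤ ℓ−1`, `0 ≤ i ≤ s − a_{t,j} − 1`, is linearly independent over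
`F` in `R = F[x,y,z]/⟨x^s−α, y^ℓ−β, z^k−γ⟩`. -/
theorem stmt9 {F : Type*} [Field F] [Fintype F] (s l k : ℕ)
    (hs : 1 ≤ s) (hl : 1 ≤ l) (hk : 1 ≤ k)
    (α β γ : F) (hα : α ≠ 0) (hβ : β ≠ 0) (hγ : γ ≠ 0)
    (r r' : ℕ) (hr : orderOf γ = r) (hr' : orderOf β = r')
    (ω : F) (hω : orderOf ω = r * k) (hωk : ω ^ k = γ)
    (θ : F) (hθ : orderOf θ = r' * l) (hθl : θ ^ l = β)
    (p : Fin k → Fin l → Polynomial F) (a : Fin k → Fin l → ℕ)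
    (hmonic : ∀ t j, (p t j).Monic)
    (hdvd : ∀ t j, p t j ∣ Polynomial.X ^ s - Polynomial.C α)
    (hdeg : ∀ t j, (p t j).natDegree = a t j) :
    LinearIndependent F
      (fun idx : Σ t : Fin k, Σ j : Fin l, Fin (s - a t j) =>
        Ideal.Quotient.mk (ccIdeal F s l k α β γ)
          (inX (Polynomial.X ^ (idx.2.2 : ℕ) * p idx.1 idx.2.1) *
            inY (zetaPoly θ r' l idx.2.1) * inZ (zetaPoly ω r k idx.1))) := by
  have hiω := node_injOn ω γ r k hk hγ hω hωk
  have hiθ := node_injOn θ β r' l hl hβ hθ hθl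
  rw [Fintype.linearIndependent_iff]
  rintro g hg ⟨t, j, i⟩
  have h := congrArg (evalYZ s l k α β γ (θ ^ (1 + (j : ℕ) * r')) (ω ^ (1 + (t : ℕ) * r))
    (node_pow θ β r' l j hr' hθl) (node_pow ω γ r k t hr hωk)) hg
  simp only [map_sum, map_smul, map_zero, evalYZ_apply, zetaPoly_eval _ _ _ hiω,
    zetaPoly_eval _ _ _ hiθ, Fintype.sum_sigma] at h
  -- Only the terms with index `(t, j, _)` survive.
  rw [Finset.sum_eq_single t (fun u _ hu => by simp [hu]) (by simp),
    Finset.sum_eq_single j (fun u _ hu => by simp [hu]) (by simp)] at h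
  simp only [if_true, C_1, mul_one] at h
  set q : F[X] := ∑ x : Fin (s - a t j), C (g ⟨t, j, x⟩) * X ^ (x : ℕ) with hq
  have hmk : AdjoinRoot.mk (X ^ s - C α : F[X]) (q * p t j) = 0 := by
    rw [← h, hq, Finset.sum_mul, map_sum]
    refine Finset.sum_congr rfl fun x _ => ?_
    rw [mul_assoc, ← smul_eq_C_mul, ← AdjoinRoot.smul_mk]
  rw [AdjoinRoot.mk_eq_zero] at hmk
  have hqdeg : q.degree < (s - a t j : ℕ) := by
    rw [hq, degree_lt_iff_coeff_zero]
    intro m hm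
    rw [finsetSum_coeff]
    refine Finset.sum_eq_zero fun x _ => ?_
    rw [coeff_C_mul_X_pow, if_neg]
    have := x.2
    omega
  have hq0 : q = 0 := by
    by_contra hne
    have hle := natDegree_le_of_dvd hmk (mul_ne_zero hne (hmonic t j).ne_zero)
    rw [natDegree_X_pow_sub_C, natDegree_mul hne (hmonic t j).ne_zero, hdeg] at hle
    have := (natDegree_lt_iff_degree_lt hne).2 hqdeg
    omega
  have hc := congrArg (fun f => coeff f (i : ℕ)) hq0
  simp only [hq, finsetSum_coeff, coeff_C_mul_X_pow, coeff_zero] at hc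
  rw [Finset.sum_eq_single i (fun x _ hx => if_neg fun e => hx (Fin.ext e.symm)) (by simp)] at hc
  simpa using hc
end

section
/- Let F be a finite field, let s,ℓ,k ≥ 1, and let α,β,γ ∈ {1,−1} ⊆ F be nonzero; let r and r' be the multiplicative orders of γ and β (so r, r' ∈ {1,2}). Assume ω ∈ F has multiplicative order rk with ω^k = γ, and θ ∈ F has multiplicative order r'ℓ with θ^ℓ = β. Let ζ_t(z) := ∏_{t'≠t}(z − ω^{1+t'r})/(ω^{1+tr} − ω^{1+t'r}) for 0 ≤ t ≤ k−1 and η_j(y) := ∏_{j'≠j}(y − θ^{1+j'r'})/(θ^{1+jr'} − θ^{1+j'r'}) for 0 ≤ j ≤ ℓ−1. For 0 ≤ t ≤ k−1 and 0 ≤ j ≤ ℓ−1 let p_j^{(t)} ∈ F[x] be a monic divisor of x^s − α of degree a_{t,j} and q_j^{(t)} := (x^s − α)/p_j^{(t)}. Suppose m_{t,j} ∈ F[x] are polynomials such that each m_{t,j} either is zero or has degree at most a_{t,j} − 1 (in particular m_{t,j} = 0 whenever a_{t,j} = 0), and suppose Σ_{t=0}^{k−1} Σ_{j=0}^{ℓ−1}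 m_{t,j}(x)·q_j^{(t)*}(x)·η_j^{*}(y)·ζ_t^{*}(z) lies in the ideal of F[x,y,z] generated by x^s−α, y^ℓ−β, z^k−γ, where * denotes the reciprocal polynomial. Then m_{t,j} = 0 for all t, j. -/
/-! The nodes `u_t = ω^{1+tr}` are distinct roots of `z^k − γ`, and since `γ = ±1` so are their
inverses; likewise for `v_j = θ^{1+jr'}` and `y^ℓ − β`. Substituting `z = u_t⁻¹`, `y = v_j⁻¹`
therefore sends the ideal into `⟨x^s − α⟩ ⊆ F[x]`. A reciprocal polynomial satisfies
`f*(u⁻¹)·u^{deg f} = f(u)`, so the substitution kills every `ζ_{t'}*`, `η_{j'}*` except the one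
with matching index (`eval_inv_reverse_zetaPoly_ne`, `eval_inv_reverse_zetaPoly_self`). What
remains is that `x^s − α` divides a nonzero multiple of `m_{t,j} q_j^{(t)*}`, a polynomial of degree
less than `a_{t,j} + (s − a_{t,j}) = s`; hence it vanishes, and with it `m_{t,j}`. -/

open Polynomial

section Nodes

variable {F : Type*} [Field F]

lemma eval_inv_reverse_mul_pow {u : F} (hu : u ≠ 0) (f : Polynomial F) :
    f.reverse.eval u⁻¹ * u ^ f.natDegree = f.eval u := by
  let _ := invertibleOfNonzero hu
  simpa [eval₂_id] using eval₂_reverse_mul_pow (RingHom.id F) u f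

lemma eval_inv_reverse_eq_zero_iff {u : F} (hu : u ≠ 0) (f : Polynomial F) :
    f.reverse.eval u⁻¹ = 0 ↔ f.eval u = 0 := by
  rw [← eval_inv_reverse_mul_pow hu f]
  simp [hu]

/-- The nodes are pairwise distinct: their exponents are distinct and span less than one period
of `ω`. -/
lemma node_injOn_s12 {ω : F} {r k : ℕ} (hr : 1 ≤ r) (hk : 1 ≤ k) (hω : orderOf ω = r * k)
    {t t' : ℕ} (ht : t < k) (ht' : t' < k) (h : ω ^ (1 + t * r) = ω ^ (1 + t' * r)) : t = t' := by
  have hω0 : ω ≠ 0 := by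
    rintro rfl
    have : 0 < r * k := Nat.mul_pos hr hk
    simp [← hω] at this
  rw [pow_add, pow_add] at h
  have h2 := mul_left_cancel₀ (pow_ne_zero 1 hω0) h
  have h3 : t * r = t' * r := pow_injOn_Iio_orderOf (x := ω)
    (by rw [Set.mem_Iio, hω, mul_comm r]; exact Nat.mul_lt_mul_of_pos_right ht hr)
    (by rw [Set.mem_Iio, hω, mul_comm r]; exact Nat.mul_lt_mul_of_pos_right ht' hr) h2
  exact Nat.eq_of_mul_eq_mul_right hr h3

lemma eval_inv_reverse_zetaPoly_ne {ω : F} (hω0 : ω ≠ 0) {r k t t' : ℕ} (ht : t < k)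
    (hne : t' ≠ t) : (zetaPoly ω r k t').reverse.eval (ω ^ (1 + t * r))⁻¹ = 0 := by
  rw [eval_inv_reverse_eq_zero_iff (pow_ne_zero _ hω0), zetaPoly, eval_prod]
  exact Finset.prod_eq_zero
    (Finset.mem_erase.2 ⟨hne.symm, Finset.mem_range.2 ht⟩) (by simp)

lemma eval_inv_reverse_zetaPoly_self {ω : F} (hω0 : ω ≠ 0) {r k t : ℕ} (hr : 1 ≤ r) (hk : 1 ≤ k)
    (hω : orderOf ω = r * k) (ht : t < k) :
    (zetaPoly ω r k t).reverse.eval (ω ^ (1 + t * r))⁻¹ ≠ 0 := by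
  rw [Ne, eval_inv_reverse_eq_zero_iff (pow_ne_zero _ hω0), zetaPoly, eval_prod,
    Finset.prod_eq_zero_iff]
  rintro ⟨t', ht', h0⟩
  rw [Finset.mem_erase, Finset.mem_range] at ht'
  have hsub : ω ^ (1 + t * r) - ω ^ (1 + t' * r) ≠ 0 := fun h =>
    ht'.1 (node_injOn_s12 hr hk hω ht ht'.2 (sub_eq_zero.1 h)).symm
  simp [hsub] at h0

/-- The inverse of a node is a root of `z^k − γ`, because `γ⁻¹ = γ`. -/
lemma inv_node_pow {ω γ : F} {r k : ℕ} (hγ : γ = 1 ∨ γ = -1) (hω : orderOf ω = r * k)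
    (hωk : ω ^ k = γ) (t : ℕ) : ((ω ^ (1 + t * r))⁻¹) ^ k = γ := by
  have h1 : (ω ^ (1 + t * r)) ^ k = γ := by
    have h2 : ω ^ (r * k) = 1 := hω ▸ pow_orderOf_eq_one ω
    calc (ω ^ (1 + t * r)) ^ k = ω ^ k * (ω ^ (r * k)) ^ t := by ring
      _ = γ := by rw [h2, hωk, one_pow, mul_one]
  rw [inv_pow, h1]
  rcases hγ with rfl | rfl
  · simp
  · rw [inv_neg, inv_one]

lemma ne_zero_and_order_pos {γ ω : F} {r k : ℕ} (hγ : γ = 1 ∨ γ = -1) (hk : 1 ≤ k)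
    (hr : orderOf γ = r) (hωk : ω ^ k = γ) : ω ≠ 0 ∧ 1 ≤ r := by
  have hγ0 : γ ≠ 0 := by rcases hγ with rfl | rfl <;> simp
  refine ⟨?_, ?_⟩
  · rintro rfl
    exact hγ0 (by rw [← hωk, zero_pow (by omega)])
  · rw [← hr]
    refine orderOf_pos_iff.2 (isOfFinOrder_iff_pow_eq_one.2 ⟨2, by norm_num, ?_⟩)
    rcases hγ with rfl | rfl <;> simp

/-- The substitution `y ↦ b`, `z ↦ c` into `F[x]`. -/
noncomputable def substYZ (b c : F) : MvPolynomial (Fin 3) F →ₐ[F] Polynomial F :=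
  MvPolynomial.aeval ![X, C b, C c]

@[simp] lemma substYZ_inX (b c : F) (f : Polynomial F) : substYZ b c (inX f) = f := by
  rw [inX, ← aeval_algHom_apply]
  simp [substYZ]

@[simp] lemma substYZ_inY (b c : F) (f : Polynomial F) : substYZ b c (inY f) = C (f.eval b) := by
  rw [inY, ← aeval_algHom_apply]
  have : substYZ b c (MvPolynomial.X 1) = algebraMap F (Polynomial F) b := by simp [substYZ]
  rw [this, aeval_algebraMap_apply]
  simp

@[simp] lemma substYZ_inZ (b c : F) (f : Polynomial F) : substYZ b c (inZ f) = C (f.eval c) := by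
  rw [inZ, ← aeval_algHom_apply]
  have : substYZ b c (MvPolynomial.X 2) = algebraMap F (Polynomial F) c := by simp [substYZ]
  rw [this, aeval_algebraMap_apply]
  simp

lemma dvd_substYZ_of_mem {s l k : ℕ} {α β γ b c : F} (hb : b ^ l = β) (hc : c ^ k = γ)
    {P : MvPolynomial (Fin 3) F} (hP : P ∈ ccIdeal F s l k α β γ) :
    X ^ s - C α ∣ substYZ b c P := by
  rw [← Ideal.mem_span_singleton, ← Ideal.mem_comap]
  refine (Ideal.span_le.2 ?_ : ccIdeal F s l k α β γ ≤ _) hP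
  rintro _ (rfl | rfl | rfl)
  · simp [substYZ, ← algebraMap_eq]
  · simp [substYZ, ← hb, ← algebraMap_eq]
  · simp [substYZ, ← hc, ← algebraMap_eq]

end Nodes

/-- Rows of the dual generator matrix are linearly independent: if each `m_{t,j}` is zero
or of degree at most `a_{t,j} − 1` (i.e. `deg m_{t,j} < a_{t,j}` as extended degrees) and
`Σ_{t,j} m_{t,j}(x)·q_j^{(t)*}(x)·η_j^*(y)·ζ_t^*(z)` lies in `⟨x^s−α, y^ℓ−β, z^k−γ⟩`,
then all `m_{t,j}` vanish. -/
theorem stmt12 {F : Type*} [Field F] [Fintype F] (s l k : ℕ)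
    (hs : 1 ≤ s) (hl : 1 ≤ l) (hk : 1 ≤ k)
    (α β γ : F) (hα : α = 1 ∨ α = -1) (hβ : β = 1 ∨ β = -1) (hγ : γ = 1 ∨ γ = -1)
    (r r' : ℕ) (hr : orderOf γ = r) (hr' : orderOf β = r')
    (ω : F) (hω : orderOf ω = r * k) (hωk : ω ^ k = γ)
    (θ : F) (hθ : orderOf θ = r' * l) (hθl : θ ^ l = β)
    (p q : Fin k → Fin l → Polynomial F) (a : Fin k → Fin l → ℕ)
    (hmonic : ∀ t j, (p t j).Monic)
    (hpq : ∀ t j, p t j * q t j = Polynomial.X ^ s - Polynomial.C α)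
    (hdeg : ∀ t j, (p t j).natDegree = a t j)
    (m : Fin k → Fin l → Polynomial F)
    (hm : ∀ t j, (m t j).degree < (a t j : ℕ))
    (hsum : (∑ t : Fin k, ∑ j : Fin l,
        inX (m t j * (q t j).reverse) * inY ((zetaPoly θ r' l j).reverse) *
          inZ ((zetaPoly ω r k t).reverse)) ∈ ccIdeal F s l k α β γ) :
    ∀ t j, m t j = 0 := by
  intro t j
  obtain ⟨hω0, hr1⟩ := ne_zero_and_order_pos hγ hk hr hωk
  obtain ⟨hθ0, hr1'⟩ := ne_zero_and_order_pos hβ hl hr' hθl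
  have hdvd := dvd_substYZ_of_mem (inv_node_pow hβ hθ hθl j) (inv_node_pow hγ hω hωk t) hsum
  simp only [map_sum, map_mul, substYZ_inX, substYZ_inY, substYZ_inZ] at hdvd
  rw [Finset.sum_eq_single_of_mem t (Finset.mem_univ t), Finset.sum_eq_single_of_mem j
    (Finset.mem_univ j)] at hdvd
  rotate_left
  · intro j' _ hne
    rw [eval_inv_reverse_zetaPoly_ne hθ0 j.2 (fun h => hne (Fin.ext h))]
    simp
  · intro t' _ hne
    refine Finset.sum_eq_zero fun j' _ => ?_
    rw [eval_inv_reverse_zetaPoly_ne hω0 t.2 (fun h => hne (Fin.ext h))]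
    simp
  have hη := eval_inv_reverse_zetaPoly_self hθ0 hr1' hl hθ j.2
  have hζ := eval_inv_reverse_zetaPoly_self hω0 hr1 hk hω t.2
  rw [mul_assoc, ← C_mul, (isUnit_C.2 (mul_ne_zero hη hζ).isUnit).dvd_mul_right] at hdvd
  have hXs : X ^ s - C α ≠ 0 := (monic_X_pow_sub_C α (by omega)).ne_zero
  have hq : q t j ≠ 0 := fun h => hXs (by rw [← hpq t j, h, mul_zero])
  have hqr : (q t j).reverse ≠ 0 := by rwa [Ne, reverse_eq_zero]
  by_contra hm0
  have hlt : (m t j * (q t j).reverse).degree < (X ^ s - C α).degree := by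
    rw [← hpq t j, degree_mul, degree_mul, degree_eq_natDegree (hmonic t j).ne_zero, hdeg,
      degree_eq_natDegree hm0, degree_eq_natDegree hqr, degree_eq_natDegree hq]
    have h1 := hm t j
    rw [degree_eq_natDegree hm0] at h1
    have h2 := reverse_natDegree_le (q t j)
    norm_cast at h1 ⊢
    omega
  exact absurd (eq_zero_of_dvd_of_degree_lt hdvd hlt) (mul_ne_zero hm0 hqr)
end
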